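/- (Guardedness of NB in Otway–Rees.) If evs ∈ or, B ∉ bad and Says B Server ⟨Nonce NA, Agent A, Agent B, X, Crypt (shrK B) ⟨Nonce NA, Nonce NB, Agent A, Agent B⟩⟩ ∈ set evs, then Guard NB {shrK B} (spies evs); consequently Nonce NB ∉ analz (spies evs). -/

import Mathlib

inductive agent : Type
  | Server : agent
  | Friend : ℕ → agent
  | Spy : agent
deriving DecidableEq

inductive msg : Type
  | Agent : agent → msg
  | Number : ℕ → msg
  | Nonce : ℕ → msg
  | Key : ℕ → msg
  | Hash : msg → msg
  | MPair : msg → msg → msg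
  | Crypt : ℕ → msg → msg
deriving DecidableEq

inductive partsP (H : Set msg) : msg → Prop
  | Inj : ∀ X, X ∈ H → partsP H X
  | Fst : ∀ X Y, partsP H (msg.MPair X Y) → partsP H X
  | Snd : ∀ X Y, partsP H (msg.MPair X Y) → partsP H Y
  | Body : ∀ K X, partsP H (msg.Crypt K X) → partsP H X

/-- `parts H`: sub-components of messages of `H`. -/
def parts (H : Set msg) : Set msg := {X | partsP H X}

inductive analzP (invKey : ℕ → ℕ) (H : Set msg) : msg → Prop
  | Inj : ∀ X, X ∈ H → analzP invKey H X
  | Fst : ∀ X Y, analzP invKey H (msg.MPair X Y) → analzP invKey H X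
  | Snd : ∀ X Y, analzP invKey H (msg.MPair X Y) → analzP invKey H Y
  | Decrypt : ∀ K X, analzP invKey H (msg.Crypt K X) →
      analzP invKey H (msg.Key (invKey K)) → analzP invKey H X

/-- `analz invKey H`: what can be obtained by decomposing and decrypting messages of `H`. -/
def analz (invKey : ℕ → ℕ) (H : Set msg) : Set msg := {X | analzP invKey H X}

inductive synthP (H : Set msg) : msg → Prop
  | Inj : ∀ X, X ∈ H → synthP H X
  | Ag : ∀ a, synthP H (msg.Agent a)
  | Num : ∀ n, synthP H (msg.Number n)
  | Hsh : ∀ X, synthP H X → synthP H (msg.Hash X)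
  | Pr : ∀ X Y, synthP H X → synthP H Y → synthP H (msg.MPair X Y)
  | Cry : ∀ K X, synthP H X → msg.Key K ∈ H → synthP H (msg.Crypt K X)

/-- `synth H`: messages that can be synthesized from `H`. -/
def synth (H : Set msg) : Set msg := {X | synthP H X}

inductive guardP (invKey : ℕ → ℕ) (n : ℕ) (Ks : Set ℕ) : msg → Prop
  | No_Nonce : ∀ X, msg.Nonce n ∉ parts {X} → guardP invKey n Ks X
  | Guard : ∀ K X, invKey K ∈ Ks → guardP invKey n Ks (msg.Crypt K X)
  | Cry : ∀ K X, guardP invKey n Ks X → guardP invKey n Ks (msg.Crypt K X)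
  | Pr : ∀ X Y, guardP invKey n Ks X → guardP invKey n Ks Y →
      guardP invKey n Ks (msg.MPair X Y)

/-- `guard n Ks`: messages in which `Nonce n` is guarded by the keys of `Ks`. -/
def guardMsg (invKey : ℕ → ℕ) (n : ℕ) (Ks : Set ℕ) : Set msg := {X | guardP invKey n Ks X}

/-- `Guard n Ks H`: every message of `H` lies in `guard n Ks`. -/
def Guard (invKey : ℕ → ℕ) (n : ℕ) (Ks : Set ℕ) (H : Set msg) : Prop :=
  ∀ X ∈ H, X ∈ guardMsg invKey n Ks
inductive event : Type
  | Says : agent → agent → msg → event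
deriving DecidableEq

def msgOf : event → msg
  | event.Says _ _ X => X

/-- Set of messages sent in a trace. -/
def sent (evs : List event) : Set msg :=
  {X | ∃ A B, event.Says A B X ∈ evs}
/-- Initial knowledge of each agent in a shared-key infrastructure:
every agent knows its own shared key; the spy moreover knows
the shared keys of the bad agents. -/
def initStateS (shrK : agent → ℕ) (bad : Set agent) : agent → Set msg :=
  fun A =>
    match A with
    | agent.Spy => {X | ∃ B ∈ bad, X = msg.Key (shrK B)}
    | _ => {msg.Key (shrK A)}

/-- `spies evs`: the shared keys of the bad agents and every message sent in `evs`. -/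
def spiesS (shrK : agent → ℕ) (bad : Set agent) (evs : List event) : Set msg :=
  initStateS shrK bad agent.Spy ∪ sent evs

/-- `used evs`: parts of all agents' initial knowledge and of all messages sent in `evs`. -/
def usedS (shrK : agent → ℕ) (bad : Set agent) (evs : List event) : Set msg :=
  parts ((⋃ A, initStateS shrK bad A) ∪ sent evs)
/-- The Otway–Rees protocol. -/
inductive orp (invKey : ℕ → ℕ) (shrK : agent → ℕ) (bad : Set agent) : List event → Prop
  | Nil : orp invKey shrK bad []
  | Fake : ∀ evs B X, orp invKey shrK bad evs →
      X ∈ synth (analz invKey (spiesS shrK bad evs)) →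
      orp invKey shrK bad (event.Says agent.Spy B X :: evs)
  | OR1 : ∀ evs A B NA, orp invKey shrK bad evs →
      msg.Nonce NA ∉ usedS shrK bad evs →
      orp invKey shrK bad (event.Says A B (msg.MPair (msg.Nonce NA)
        (msg.MPair (msg.Agent A) (msg.MPair (msg.Agent B)
          (msg.Crypt (shrK A)
            (msg.MPair (msg.Nonce NA) (msg.MPair (msg.Agent A) (msg.Agent B))))))) :: evs)
  | OR2 : ∀ evs A A' B NA NB X, orp invKey shrK bad evs →
      msg.Nonce NB ∉ usedS shrK bad evs →
      event.Says A' B (msg.MPair (msg.Nonce NA)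
        (msg.MPair (msg.Agent A) (msg.MPair (msg.Agent B) X))) ∈ evs →
      orp invKey shrK bad (event.Says B agent.Server (msg.MPair (msg.Nonce NA)
        (msg.MPair (msg.Agent A) (msg.MPair (msg.Agent B) (msg.MPair X
          (msg.Crypt (shrK B) (msg.MPair (msg.Nonce NA) (msg.MPair (msg.Nonce NB)
            (msg.MPair (msg.Agent A) (msg.Agent B))))))))) :: evs)
  | OR3 : ∀ evs A B B' NA NB KAB, orp invKey shrK bad evs →
      msg.Key KAB ∉ usedS shrK bad evs →
      event.Says B' agent.Server (msg.MPair (msg.Nonce NA)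
        (msg.MPair (msg.Agent A) (msg.MPair (msg.Agent B) (msg.MPair
          (msg.Crypt (shrK A)
            (msg.MPair (msg.Nonce NA) (msg.MPair (msg.Agent A) (msg.Agent B))))
          (msg.Crypt (shrK B) (msg.MPair (msg.Nonce NA) (msg.MPair (msg.Nonce NB)
            (msg.MPair (msg.Agent A) (msg.Agent B))))))))) ∈ evs →
      orp invKey shrK bad (event.Says agent.Server B (msg.MPair (msg.Nonce NA)
        (msg.MPair (msg.Crypt (shrK A) (msg.MPair (msg.Nonce NA) (msg.Key KAB)))
          (msg.Crypt (shrK B) (msg.MPair (msg.Nonce NB) (msg.Key KAB))))) :: evs)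
  | OR4 : ∀ evs A B S NA NB KAB X Y, orp invKey shrK bad evs →
      event.Says B agent.Server (msg.MPair (msg.Nonce NA)
        (msg.MPair (msg.Agent A) (msg.MPair (msg.Agent B) (msg.MPair X
          (msg.Crypt (shrK B) (msg.MPair (msg.Nonce NA) (msg.MPair (msg.Nonce NB)
            (msg.MPair (msg.Agent A) (msg.Agent B))))))))) ∈ evs →
      event.Says S B (msg.MPair (msg.Nonce NA) (msg.MPair Y
        (msg.Crypt (shrK B) (msg.MPair (msg.Nonce NB) (msg.Key KAB))))) ∈ evs →
      orp invKey shrK bad (event.Says B A (msg.MPair (msg.Nonce NA) Y) :: evs)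

theorem parts_trans1 {H : Set msg} {Y Z : msg} (h : partsP {Y} Z) : partsP H Y → partsP H Z := by
  intro hY
  induction h with
  | Inj X h => cases h; exact hY
  | Fst X Y _ ih => exact .Fst _ _ ih
  | Snd X Y _ ih => exact .Snd _ _ ih
  | Body K X _ ih => exact .Body _ _ ih

theorem parts_mono1 {H G : Set msg} (hs : H ⊆ G) {Z : msg} (h : partsP H Z) : partsP G Z := by
  induction h with
  | Inj X h => exact .Inj _ (hs h)
  | Fst X Y _ ih => exact .Fst _ _ ih
  | Snd X Y _ ih => exact .Snd _ _ ih
  | Body K X _ ih => exact .Body _ _ ih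

theorem parts_ex {H : Set msg} {Z : msg} (h : partsP H Z) : ∃ Y ∈ H, partsP {Y} Z := by
  induction h with
  | Inj X h => exact ⟨X, h, .Inj _ rfl⟩
  | Fst X Y _ ih => obtain ⟨W, hW, h⟩ := ih; exact ⟨W, hW, .Fst _ _ h⟩
  | Snd X Y _ ih => obtain ⟨W, hW, h⟩ := ih; exact ⟨W, hW, .Snd _ _ h⟩
  | Body K X _ ih => obtain ⟨W, hW, h⟩ := ih; exact ⟨W, hW, .Body _ _ h⟩

theorem parts_pair (X Y Z : msg) :
    partsP {msg.MPair X Y} Z ↔ Z = msg.MPair X Y ∨ partsP {X} Z ∨ partsP {Y} Z := by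
  constructor
  · intro h
    induction h with
    | Inj W h => exact .inl h
    | Fst U V _ ih =>
      rcases ih with h | h | h
      · cases h; exact .inr (.inl (.Inj _ rfl))
      · exact .inr (.inl (.Fst _ _ h))
      · exact .inr (.inr (.Fst _ _ h))
    | Snd U V _ ih =>
      rcases ih with h | h | h
      · cases h; exact .inr (.inr (.Inj _ rfl))
      · exact .inr (.inl (.Snd _ _ h))
      · exact .inr (.inr (.Snd _ _ h))
    | Body K V _ ih =>
      rcases ih with h | h | h
      · cases h
      · exact .inr (.inl (.Body _ _ h))
      · exact .inr (.inr (.Body _ _ h))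
  · rintro (rfl | h | h)
    · exact .Inj _ rfl
    · exact parts_trans1 h (.Fst _ _ (.Inj _ rfl))
    · exact parts_trans1 h (.Snd _ _ (.Inj _ rfl))

theorem parts_crypt (K : ℕ) (X Z : msg) :
    partsP {msg.Crypt K X} Z ↔ Z = msg.Crypt K X ∨ partsP {X} Z := by
  constructor
  · intro h
    induction h with
    | Inj W h => exact .inl h
    | Fst U V _ ih =>
      rcases ih with h | h
      · cases h
      · exact .inr (.Fst _ _ h)
    | Snd U V _ ih =>
      rcases ih with h | h
      · cases h
      · exact .inr (.Snd _ _ h)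
    | Body K V _ ih =>
      rcases ih with h | h
      · cases h; exact .inr (.Inj _ rfl)
      · exact .inr (.Body _ _ h)
  · rintro (rfl | h)
    · exact .Inj _ rfl
    · exact parts_trans1 h (.Body _ _ (.Inj _ rfl))

theorem parts_atom (X Z : msg) (h1 : ∀ U V, X ≠ msg.MPair U V) (h2 : ∀ K V, X ≠ msg.Crypt K V) :
    partsP {X} Z ↔ Z = X := by
  constructor
  · intro h
    induction h with
    | Inj W h => exact h
    | Fst U V _ ih => exact absurd ih.symm (h1 _ _)
    | Snd U V _ ih => exact absurd ih.symm (h1 _ _)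
    | Body K V _ ih => exact absurd ih.symm (h2 _ _)
  · rintro rfl; exact .Inj _ rfl

theorem parts_agent (a : agent) (Z : msg) : partsP {msg.Agent a} Z ↔ Z = msg.Agent a :=
  parts_atom _ _ (by simp) (by simp)
theorem parts_number (a : ℕ) (Z : msg) : partsP {msg.Number a} Z ↔ Z = msg.Number a :=
  parts_atom _ _ (by simp) (by simp)
theorem parts_nonce (a : ℕ) (Z : msg) : partsP {msg.Nonce a} Z ↔ Z = msg.Nonce a :=
  parts_atom _ _ (by simp) (by simp)
theorem parts_key (a : ℕ) (Z : msg) : partsP {msg.Key a} Z ↔ Z = msg.Key a :=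
  parts_atom _ _ (by simp) (by simp)
theorem parts_hash (a : msg) (Z : msg) : partsP {msg.Hash a} Z ↔ Z = msg.Hash a :=
  parts_atom _ _ (by simp) (by simp)

theorem guard_nonce {invKey : ℕ → ℕ} {n : ℕ} {Ks : Set ℕ} (m : ℕ) :
    guardP invKey n Ks (msg.Nonce m) ↔ m ≠ n := by
  constructor
  · intro h
    cases h with
    | No_Nonce _ h => rintro rfl; exact h (.Inj _ rfl)
  · intro h
    refine .No_Nonce _ fun h' => h ?_
    have := (parts_nonce _ _).1 h'
    cases this; rfl

theorem guard_pair {invKey : ℕ → ℕ} {n : ℕ} {Ks : Set ℕ} (X Y : msg) :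
    guardP invKey n Ks (msg.MPair X Y) ↔ guardP invKey n Ks X ∧ guardP invKey n Ks Y := by
  constructor
  · intro h
    cases h with
    | No_Nonce _ h =>
      exact ⟨.No_Nonce _ fun h' => h ((parts_pair _ _ _).2 (.inr (.inl h'))),
        .No_Nonce _ fun h' => h ((parts_pair _ _ _).2 (.inr (.inr h')))⟩
    | Pr _ _ h1 h2 => exact ⟨h1, h2⟩
  · rintro ⟨h1, h2⟩; exact .Pr _ _ h1 h2

theorem guard_crypt {invKey : ℕ → ℕ} {n : ℕ} {Ks : Set ℕ} (K : ℕ) (X : msg) :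
    guardP invKey n Ks (msg.Crypt K X) ↔ invKey K ∈ Ks ∨ guardP invKey n Ks X := by
  constructor
  · intro h
    cases h with
    | No_Nonce _ h => exact .inr (.No_Nonce _ fun h' => h ((parts_crypt _ _ _).2 (.inr h')))
    | Guard _ _ h => exact .inl h
    | Cry _ _ h => exact .inr h
  · rintro (h | h)
    · exact .Guard _ _ h
    · exact .Cry _ _ h

theorem guard_agent {invKey : ℕ → ℕ} {n : ℕ} {Ks : Set ℕ} (a : agent) :
    guardP invKey n Ks (msg.Agent a) :=
  .No_Nonce _ fun h => by cases (parts_agent _ _).1 h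
theorem guard_number {invKey : ℕ → ℕ} {n : ℕ} {Ks : Set ℕ} (a : ℕ) :
    guardP invKey n Ks (msg.Number a) :=
  .No_Nonce _ fun h => by cases (parts_number _ _).1 h
theorem guard_key {invKey : ℕ → ℕ} {n : ℕ} {Ks : Set ℕ} (a : ℕ) :
    guardP invKey n Ks (msg.Key a) :=
  .No_Nonce _ fun h => by cases (parts_key _ _).1 h
theorem guard_hash {invKey : ℕ → ℕ} {n : ℕ} {Ks : Set ℕ} (a : msg) :
    guardP invKey n Ks (msg.Hash a) :=
  .No_Nonce _ fun h => by cases (parts_hash _ _).1 h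

theorem analz_parts {invKey : ℕ → ℕ} {H : Set msg} {X : msg} (h : analzP invKey H X) :
    partsP H X := by
  induction h with
  | Inj X h => exact .Inj _ h
  | Fst X Y _ ih => exact .Fst _ _ ih
  | Snd X Y _ ih => exact .Snd _ _ ih
  | Decrypt K X _ _ ih _ => exact .Body _ _ ih

theorem analz_guard {invKey : ℕ → ℕ} {n : ℕ} {Ks : Set ℕ} {H : Set msg}
    (hG : Guard invKey n Ks H) (hK : ∀ K ∈ Ks, ¬ analzP invKey H (msg.Key K))
    {X : msg} (h : analzP invKey H X) : guardP invKey n Ks X := by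
  induction h with
  | Inj X h => exact hG _ h
  | Fst X Y _ ih => exact ((guard_pair _ _).1 ih).1
  | Snd X Y _ ih => exact ((guard_pair _ _).1 ih).2
  | Decrypt K X _ hk ih _ =>
    rcases (guard_crypt _ _).1 ih with h | h
    · exact absurd hk (hK _ h)
    · exact h

theorem synth_guard {invKey : ℕ → ℕ} {n : ℕ} {Ks : Set ℕ} {H : Set msg}
    (hG : ∀ X ∈ H, guardP invKey n Ks X)
    {X : msg} (h : synthP H X) : guardP invKey n Ks X := by
  induction h with
  | Inj X h => exact hG _ h
  | Ag a => exact guard_agent a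
  | Num a => exact guard_number a
  | Hsh X _ _ => exact guard_hash X
  | Pr X Y _ _ h1 h2 => exact .Pr _ _ h1 h2
  | Cry K X _ _ h => exact .Cry _ _ h

theorem synth_parts {invKey : ℕ → ℕ} {H : Set msg} {X Z : msg}
    (h : synthP (analz invKey H) X) (hZ : partsP {X} Z) :
    partsP H Z ∨ synthP (analz invKey H) Z := by
  induction h with
  | Inj X h => exact .inl (parts_trans1 hZ (analz_parts h))
  | Ag a => rw [parts_agent] at hZ; subst hZ; exact .inr (.Ag _)
  | Num a => rw [parts_number] at hZ; subst hZ; exact .inr (.Num _)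
  | Hsh X h _ => rw [parts_hash] at hZ; subst hZ; exact .inr (.Hsh _ h)
  | Pr X Y a b h1 h2 =>
    rcases (parts_pair _ _ _).1 hZ with rfl | h | h
    · exact .inr (.Pr _ _ a b)
    · exact h1 h
    · exact h2 h
  | Cry K X a b h1 =>
    rcases (parts_crypt _ _ _).1 hZ with rfl | h
    · exact .inr (.Cry _ _ a b)
    · exact h1 h

theorem sent_spies {shrK : agent → ℕ} {bad : Set agent} {evs : List event} {A B : agent} {X : msg}
    (h : event.Says A B X ∈ evs) : X ∈ spiesS shrK bad evs := .inr ⟨A, B, h⟩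

theorem spies_cons {shrK : agent → ℕ} {bad : Set agent} {evs : List event} {A B : agent}
    {X Z : msg} : Z ∈ spiesS shrK bad (event.Says A B X :: evs) ↔
      Z = X ∨ Z ∈ spiesS shrK bad evs := by
  constructor
  · rintro (h | ⟨A', B', h⟩)
    · exact .inr (.inl h)
    · rcases List.mem_cons.1 h with h | h
      · cases h; exact .inl rfl
      · exact .inr (sent_spies h)
  · rintro (rfl | h | ⟨A', B', h⟩)
    · exact .inr ⟨A, B, by simp⟩
    · exact .inl h
    · exact .inr ⟨A', B', List.mem_cons_of_mem _ h⟩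

theorem parts_cons {shrK : agent → ℕ} {bad : Set agent} {evs : List event} {A B : agent}
    {X Z : msg} : partsP (spiesS shrK bad (event.Says A B X :: evs)) Z ↔
      partsP {X} Z ∨ partsP (spiesS shrK bad evs) Z := by
  constructor
  · intro h
    obtain ⟨Y, hY, hq⟩ := parts_ex h
    rcases spies_cons.1 hY with rfl | hY
    · exact .inl hq
    · exact .inr (parts_trans1 hq (.Inj _ hY))
  · rintro (h | h)
    · exact parts_trans1 h (.Inj _ (spies_cons.2 (.inl rfl)))
    · exact parts_mono1 (fun _ h => spies_cons.2 (.inr h)) h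

theorem spies_used {shrK : agent → ℕ} {bad : Set agent} {evs : List event} {Z : msg}
    (h : partsP (spiesS shrK bad evs) Z) : Z ∈ usedS shrK bad evs := by
  refine parts_mono1 ?_ h
  exact Set.union_subset_union_left _ (Set.subset_iUnion (initStateS shrK bad) agent.Spy)

theorem shrK_used {shrK : agent → ℕ} {bad : Set agent} (hspy : agent.Spy ∈ bad)
    (evs : List event) (A : agent) : msg.Key (shrK A) ∈ usedS shrK bad evs := by
  refine .Inj _ (.inl (Set.mem_iUnion.2 ⟨A, ?_⟩))
  cases A with
  | Server => exact rfl
  | Friend n => exact rfl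
  | Spy => exact ⟨_, hspy, rfl⟩

theorem shrK_bad {invKey : ℕ → ℕ} {shrK : agent → ℕ} {bad : Set agent}
    (hinj : Function.Injective shrK) (hspy : agent.Spy ∈ bad) {evs : List event}
    (hevs : orp invKey shrK bad evs) {B : agent}
    (h : partsP (spiesS shrK bad evs) (msg.Key (shrK B))) : B ∈ bad := by
  induction hevs with
  | Nil =>
    obtain ⟨Y, hY, hq⟩ := parts_ex h
    rcases hY with ⟨C, hC, rfl⟩ | ⟨_, _, h'⟩
    · rw [parts_key] at hq
      injection hq with h
      rwa [hinj h]
    · cases h'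
  | Fake evs C X _ hX ih =>
    rcases parts_cons.1 h with h | h
    · rcases synth_parts hX h with h | h
      · exact ih h
      · cases h with
        | Inj _ h => exact ih (analz_parts h)
    · exact ih h
  | OR1 evs A B NA _ _ ih =>
    rcases parts_cons.1 h with h | h
    · simp [parts_pair, parts_crypt, parts_agent, parts_nonce] at h
    · exact ih h
  | OR2 evs A A' B NA NB X _ _ hs ih =>
    rcases parts_cons.1 h with h | h
    · simp [parts_pair, parts_crypt, parts_agent, parts_nonce] at h
      refine ih (parts_trans1 ?_ (.Inj _ (sent_spies hs)))
      simp [parts_pair, h]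
    · exact ih h
  | OR3 evs A B B' NA NB KAB _ hK hs ih =>
    rcases parts_cons.1 h with h | h
    · simp [parts_pair, parts_crypt, parts_key, parts_nonce] at h
      exact absurd (h ▸ shrK_used hspy evs _) hK
    · exact ih h
  | OR4 evs A B S NA NB KAB X Y _ hs hs' ih =>
    rcases parts_cons.1 h with h | h
    · simp [parts_pair, parts_nonce] at h
      refine ih (parts_trans1 ?_ (.Inj _ (sent_spies hs')))
      simp [parts_pair, h]
    · exact ih h

theorem guard_cons {invKey : ℕ → ℕ} {shrK : agent → ℕ} {bad : Set agent} {n : ℕ} {Ks : Set ℕ}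
    {evs : List event} {A B : agent} {X : msg} (h : Guard invKey n Ks (spiesS shrK bad evs))
    (hX : guardP invKey n Ks X) :
    Guard invKey n Ks (spiesS shrK bad (event.Says A B X :: evs)) := by
  intro Z hZ
  rcases spies_cons.1 hZ with rfl | hZ
  · exact hX
  · exact h _ hZ

theorem guard_main {invKey : ℕ → ℕ} {shrK : agent → ℕ} {bad : Set agent}
    (hsym : ∀ A, invKey (shrK A) = shrK A)
    (hinj : Function.Injective shrK) (hspy : agent.Spy ∈ bad) {evs : List event}
    (hevs : orp invKey shrK bad evs) {A B : agent} {NA NB : ℕ} (hB : B ∉ bad)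
    (h : partsP (spiesS shrK bad evs) (msg.Crypt (shrK B) (msg.MPair (msg.Nonce NA)
      (msg.MPair (msg.Nonce NB) (msg.MPair (msg.Agent A) (msg.Agent B)))))) :
    Guard invKey NB {shrK B} (spiesS shrK bad evs) := by
  have nonce_of : ∀ {evs}, partsP (spiesS shrK bad evs) (msg.Crypt (shrK B) (msg.MPair
      (msg.Nonce NA) (msg.MPair (msg.Nonce NB) (msg.MPair (msg.Agent A) (msg.Agent B))))) →
      msg.Nonce NB ∈ usedS shrK bad evs := fun h =>
    spies_used (.Fst _ _ (.Snd _ _ (.Body _ _ h)))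
  induction hevs with
  | Nil =>
    obtain ⟨Y, hY, hq⟩ := parts_ex h
    rcases hY with ⟨C, hC, rfl⟩ | ⟨_, _, h'⟩
    · rw [parts_key] at hq
      cases hq
    · cases h'
  | Fake evs C X he hX ih =>
    have hnk : ¬ partsP (spiesS shrK bad evs) (msg.Key (shrK B)) :=
      fun h => hB (shrK_bad hinj hspy he h)
    have h' : partsP (spiesS shrK bad evs) (msg.Crypt (shrK B) (msg.MPair
      (msg.Nonce NA) (msg.MPair (msg.Nonce NB) (msg.MPair (msg.Agent A) (msg.Agent B))))) := by
      rcases parts_cons.1 h with h | h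
      · rcases synth_parts hX h with h | h
        · exact h
        · cases h with
          | Inj _ h => exact analz_parts h
          | Cry _ _ _ h => exact absurd (analz_parts h) hnk
      · exact h
    have hG := ih h'
    refine guard_cons hG (synth_guard (fun X hX => analz_guard hG ?_ hX) hX)
    rintro K rfl h
    exact hnk (analz_parts h)
  | OR1 evs A' B' NA' _ hN ih =>
    rcases parts_cons.1 h with h | h
    · simp [parts_pair, parts_crypt, parts_agent, parts_nonce] at h
    · refine guard_cons (ih h) ?_
      have : NA' ≠ NB := by rintro rfl; exact hN (nonce_of h)
      simp [guard_pair, guard_crypt, guard_nonce, guard_agent, this]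
  | OR2 evs A₁ A' B₁ NA₁ NB₁ X _ hN hs ih =>
    have key : Guard invKey NB {shrK B} (spiesS shrK bad evs) ∧ (NB₁ = NB → B₁ = B) := by
      have old : partsP (spiesS shrK bad evs) (msg.Crypt (shrK B) (msg.MPair
          (msg.Nonce NA) (msg.MPair (msg.Nonce NB) (msg.MPair (msg.Agent A) (msg.Agent B))))) →
          Guard invKey NB {shrK B} (spiesS shrK bad evs) ∧ (NB₁ = NB → B₁ = B) := by
        intro h
        refine ⟨ih h, ?_⟩
        rintro rfl
        exact absurd (nonce_of h) hN
      rcases parts_cons.1 h with h | h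
      · simp [parts_pair, parts_crypt, parts_agent, parts_nonce] at h
        rcases h with h | h
        · refine old (parts_trans1 ?_ (.Inj _ (sent_spies hs)))
          simp [parts_pair, h]
        · obtain ⟨h1, h2, h3, h4, h5⟩ := h
          subst h3 h5
          refine ⟨fun Z hZ => .No_Nonce _ fun h => hN (spies_used (parts_trans1 h (.Inj _ hZ))),
            fun _ => rfl⟩
      · exact old h
    refine guard_cons key.1 ?_
    have := key.1 _ (sent_spies hs)
    simp only [guardMsg, Set.mem_ofPred_eq, guard_pair, guard_nonce] at this
    simp only [guard_pair, guard_crypt, guard_nonce, guard_agent, this, hsym,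
      Set.mem_singleton_iff, true_and, and_true, ne_eq, not_false_eq_true]
    by_cases hb : NB₁ = NB
    · exact .inl (by rw [key.2 hb])
    · exact .inr hb
  | OR3 evs A₁ B₁ B' NA₁ NB₁ KAB _ hK hs ih =>
    rcases parts_cons.1 h with h | h
    · simp [parts_pair, parts_crypt, parts_key, parts_nonce] at h
    · have hG := ih h
      refine guard_cons hG ?_
      have := hG _ (sent_spies hs)
      simp only [guardMsg, Set.mem_ofPred_eq, guard_pair, guard_nonce, guard_crypt, hsym,
        guard_agent] at this
      simp only [guard_pair, guard_crypt, guard_nonce, guard_key, hsym]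
      tauto
  | OR4 evs A₁ B₁ S NA₁ NB₁ KAB X Y _ hs hs' ih =>
    have h' : partsP (spiesS shrK bad evs) (msg.Crypt (shrK B) (msg.MPair
      (msg.Nonce NA) (msg.MPair (msg.Nonce NB) (msg.MPair (msg.Agent A) (msg.Agent B))))) := by
      rcases parts_cons.1 h with h | h
      · simp [parts_pair, parts_nonce] at h
        refine parts_trans1 ?_ (.Inj _ (sent_spies hs'))
        simp [parts_pair, h]
      · exact h
    have hG := ih h'
    refine guard_cons hG ?_
    have := hG _ (sent_spies hs')
    simp only [guardMsg, Set.mem_ofPred_eq, guard_pair] at this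
    exact .Pr _ _ this.1 this.2.1

/-- Guardedness and secrecy of `NB` in Otway–Rees. -/
theorem Guard_NB_or
    (invKey : ℕ → ℕ) (shrK : agent → ℕ) (bad : Set agent)
    (hinv : ∀ K, invKey (invKey K) = K)
    (hsym : ∀ A, invKey (shrK A) = shrK A)
    (hinj : Function.Injective shrK)
    (hspy : agent.Spy ∈ bad)
    (evs : List event) (A B : agent) (NA NB : ℕ) (X : msg)
    (hevs : orp invKey shrK bad evs) (hB : B ∉ bad)
    (hsays : event.Says B agent.Server (msg.MPair (msg.Nonce NA)
      (msg.MPair (msg.Agent A) (msg.MPair (msg.Agent B) (msg.MPair X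
        (msg.Crypt (shrK B) (msg.MPair (msg.Nonce NA) (msg.MPair (msg.Nonce NB)
          (msg.MPair (msg.Agent A) (msg.Agent B))))))))) ∈ evs) :
    Guard invKey NB {shrK B} (spiesS shrK bad evs) ∧
      msg.Nonce NB ∉ analz invKey (spiesS shrK bad evs) := by
  have hG := guard_main hsym hinj hspy hevs (A := A) (NA := NA) (NB := NB) hB
    (.Snd _ _ (.Snd _ _ (.Snd _ _ (.Snd _ _ (.Inj _ (sent_spies hsays))))))
  refine ⟨hG, fun h => ?_⟩
  refine (guard_nonce NB).1 (analz_guard hG ?_ h) rfl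
  rintro K rfl hk
  exact hB (shrK_bad hinj hspy hevs (analz_parts hk))
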